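/- Every semigroup which is a disjoint union of finitely many copies of the free monogenic semigroup is residually finite. -/

import Mathlib

/-- `spow a n` is the `n`-th power of `a` in a semigroup, for `n ≥ 1`
(with the junk value `a` at `n = 0`). -/
def spow {S : Type*} [Semigroup S] (a : S) : ℕ → S
  | 0 => a
  | 1 => a
  | (n + 2) => spow a (n + 1) * a

/-- The subsemigroup (as a set) generated by `a`: all positive powers of `a`. -/
def Nblock {S : Type*} [Semigroup S] (a : S) : Set S :=
  {x | ∃ i : ℕ, 1 ≤ i ∧ x = spow a i}

/-- A semigroup is residually finite if any two distinct elements are separated by a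
homomorphism into some finite semigroup. -/
def ResiduallyFiniteSemigroup (S : Type*) [Semigroup S] : Prop :=
  ∀ s t : S, s ≠ t →
    ∃ (T : Type) (iT : Semigroup T) (_ : Finite T)
      (φ : @MulHom S T Semigroup.toMul iT.toMul),
        φ.toFun s ≠ φ.toFun t

/-- A monoid in which every element is uniquely a power of one of the generators
(the identity being the zeroth power). -/
structure MonoSetup (M A : Type*) [Monoid M] where
  g : A → M
  blk : M → A
  deg : M → ℕ
  rep : ∀ x, g (blk x) ^ deg x = x
  blk_pow : ∀ a i, 1 ≤ i → blk (g a ^ i) = a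
  deg_pow : ∀ a i, deg (g a ^ i) = i
  pos_left : ∀ x y, 1 ≤ deg x → 1 ≤ deg (x * y)
  pos_right : ∀ x y, 1 ≤ deg y → 1 ≤ deg (x * y)

namespace MonoSetup

variable {M A : Type*} [Monoid M]

/-- The opposite setup. -/
def opp (H : MonoSetup M A) : MonoSetup Mᵐᵒᵖ A where
  g a := MulOpposite.op (H.g a)
  blk x := H.blk x.unop
  deg x := H.deg x.unop
  rep x := by
    apply MulOpposite.unop_injective
    simp [H.rep]
  blk_pow a i hi := by simp [H.blk_pow a i hi]
  deg_pow a i := by simp [H.deg_pow]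
  pos_left x y h := by simpa using H.pos_right y.unop x.unop h
  pos_right x y h := by simpa using H.pos_left y.unop x.unop h

theorem le_left [Finite A] (H : MonoSetup M A) (x : M) (b : A) (q q' : ℕ) (hq' : 1 ≤ q')
    (h : x * H.g b ^ q = H.g b ^ q') : q ≤ q' := by
  by_contra hlt
  push Not at hlt
  obtain ⟨d, rfl⟩ := Nat.exists_eq_add_of_lt hlt
  have key : ∀ j l, q' ≤ l → x ^ j * H.g b ^ (l + j * (d + 1)) = H.g b ^ l := by
    intro j
    induction j with
    | zero => intro l _; simp
    | succ j ih =>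
      intro l hl
      obtain ⟨w, rfl⟩ := Nat.exists_eq_add_of_le hl
      have e1 : q' + w + (j + 1) * (d + 1) = (q' + d + 1) + (w + j * (d + 1)) := by ring
      rw [e1, pow_succ, pow_add (H.g b), mul_assoc, ← mul_assoc x, h, ← pow_add, ← add_assoc]
      exact ih _ hl
  let z : ℕ → M := fun j => H.g b ^ (j * (d + 1)) * x ^ j
  have hz : ∀ j k, q' ≤ k → z j * z (j + k) = z (j + k) := by
    intro j k hk
    have hk2 : q' ≤ k * (d + 1) := by nlinarith
    have e1 : (j + k) * (d + 1) = k * (d + 1) + j * (d + 1) := by ring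
    have e2 : k * (d + 1) + j * (d + 1) = j * (d + 1) + k * (d + 1) := by ring
    simp only [z]
    rw [e1, mul_assoc, ← mul_assoc (x ^ j), key _ _ hk2, ← mul_assoc, ← pow_add, e2]
  obtain ⟨i, i', hne, heq⟩ :=
    Finite.exists_ne_map_eq_of_infinite (fun i : ℕ => H.blk (z ((i + 1) * q')))
  have fin : ∀ i i' : ℕ, i < i' → H.blk (z ((i + 1) * q')) = H.blk (z ((i' + 1) * q')) → False := by
    intro i i' hii heq
    obtain ⟨w, rfl⟩ := Nat.exists_eq_add_of_lt hii
    have e1 : (i + w + 1 + 1) * q' = (i + 1) * q' + (w + 1) * q' := by ring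
    have h3 := hz ((i + 1) * q') ((w + 1) * q') (by nlinarith)
    rw [← e1] at h3
    have hp : 1 ≤ H.deg (z ((i + 1) * q')) := by
      apply H.pos_left
      rw [H.deg_pow]
      have : 0 < (i + 1) * q' * (d + 1) := by positivity
      omega
    rw [← H.rep (z ((i + 1) * q')), ← H.rep (z ((i + w + 1 + 1) * q')), heq, ← pow_add] at h3
    have := congrArg H.deg h3
    rw [H.deg_pow, H.deg_pow] at this
    omega
  rcases lt_or_gt_of_ne hne with hlt | hlt
  · exact fin _ _ hlt heq
  · exact fin _ _ hlt heq.symm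

theorem le_right [Finite A] (H : MonoSetup M A) (x : M) (b : A) (q q' : ℕ) (hq' : 1 ≤ q')
    (h : H.g b ^ q * x = H.g b ^ q') : q ≤ q' := by
  apply H.opp.le_left (MulOpposite.op x) b q q' hq'
  apply MulOpposite.unop_injective
  simpa [opp] using h

/-- The orbit of `y` under left multiplication by `a` returns to the block of `y`. -/
def Good (H : MonoSetup M A) (a : A) (y : M) : Prop :=
  ∃ r, 1 ≤ r ∧ H.blk (H.g a ^ r * y) = H.blk y

theorem ultra_const {ι B : Type*} [Finite B] (U : Ultrafilter ι) (f : ι → B) :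
    ∃ b, ∀ᶠ i in (U : Filter ι), f i = b := by
  by_contra hcon
  push Not at hcon
  have h2 := Filter.eventually_all.2 hcon
  obtain ⟨i, hi⟩ := h2.exists
  exact hi (f i) rfl

theorem shift_right [Finite A] (H : MonoSetup M A) (z : M) (d : A) (u u' : ℕ) (hu : u ≤ u')
    (h : H.g d ^ u * z = H.g d ^ u') (k w : ℕ) (hw : u ≤ w) :
    ∃ v, u ≤ v ∧ H.g d ^ w * z ^ k = H.g d ^ v := by
  induction k with
  | zero => exact ⟨w, hw, by simp⟩
  | succ k ih =>
    obtain ⟨v, hv, hve⟩ := ih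
    obtain ⟨p, rfl⟩ := Nat.exists_eq_add_of_le hv
    refine ⟨p + u', by omega, ?_⟩
    rw [pow_succ, ← mul_assoc, hve, add_comm u p, pow_add, mul_assoc, h, ← pow_add]

theorem eventually_good [Finite A] (H : MonoSetup M A) (a : A) :
    ∃ K, ∀ k, K ≤ k → ∀ x, H.Good a (H.g a ^ k * x) := by
  by_contra hcon
  push Not at hcon
  have hfreq : ∃ᶠ k in Filter.atTop, ∃ x, ¬ H.Good a (H.g a ^ k * x) :=
    Filter.frequently_atTop.2 (fun K => by
      obtain ⟨k, hk, x, hx⟩ := hcon K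
      exact ⟨k, hk, x, hx⟩)
  set P : Set ℕ := {k | ∃ x, ¬ H.Good a (H.g a ^ k * x)} with hP
  have hne : (Filter.atTop ⊓ Filter.principal P).NeBot := Filter.frequently_mem_iff_neBot.1 hfreq
  set U : Ultrafilter ℕ := Ultrafilter.of (Filter.atTop ⊓ Filter.principal P) with hU
  have hUle : (U : Filter ℕ) ≤ Filter.atTop ⊓ Filter.principal P := Ultrafilter.of_le _
  have hUtop : (U : Filter ℕ) ≤ Filter.atTop := hUle.trans inf_le_left
  have hUP : ∀ᶠ k in (U : Filter ℕ), k ∈ P := (hUle.trans inf_le_right) (Filter.mem_principal_self P)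
  have hx : ∀ k, ∃ x, k ∈ P → ¬ H.Good a (H.g a ^ k * x) := by
    intro k
    by_cases hk : k ∈ P
    · obtain ⟨x, hx⟩ := hk
      exact ⟨x, fun _ => hx⟩
    · exact ⟨1, fun h => absurd h hk⟩
  choose x hx using hx
  have hgt : ∀ i, ∀ᶠ j in (U : Filter ℕ), i < j := fun i => hUtop (Filter.eventually_gt_atTop i)
  obtain ⟨b, hb⟩ := ultra_const U (fun k => H.blk (x k))
  obtain ⟨c, hc⟩ := ultra_const U (fun k => H.blk (H.g a ^ k * x k))
  set G : Set ℕ := {k | 1 ≤ k ∧ k ∈ P ∧ H.blk (x k) = b ∧ H.blk (H.g a ^ k * x k) = c} with hG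
  have hGU : ∀ᶠ k in (U : Filter ℕ), k ∈ G := by
    filter_upwards [hgt 0, hUP, hb, hc] with k h1 h2 h3 h4
    exact ⟨h1, h2, h3, h4⟩
  set l : ℕ → ℕ := fun k => H.deg (x k) with hl
  have hxl : ∀ k ∈ G, x k = H.g b ^ l k := by
    intro k hk
    rw [← hk.2.2.1]
    exact (H.rep (x k)).symm
  -- the crucial way to contradict badness
  have hbad : ∀ i ∈ G, ∀ j, i < j → H.blk (H.g a ^ j * x i) ≠ c := by
    intro i hi j hij hcj
    apply hx i hi.2.1
    refine ⟨j - i, by omega, ?_⟩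
    rw [← mul_assoc, ← pow_add, Nat.sub_add_cancel hij.le, hcj, hi.2.2.2]
  have hinj : Set.InjOn l G := by
    have aux : ∀ i ∈ G, ∀ j ∈ G, i < j → l i ≠ l j := by
      intro i hi j hj hij hll
      apply hbad i hi j hij
      rw [hxl i hi, hll, ← hxl j hj]
      exact hj.2.2.2
    intro i hi j hj hll
    by_contra hij
    rcases lt_or_gt_of_ne hij with h | h
    · exact aux i hi j hj h hll
    · exact aux j hj i hi h hll.symm
  have hlgt : ∀ i, ∀ᶠ j in (U : Filter ℕ), l i < l j := by
    intro i
    have hfin : (G ∩ l ⁻¹' (Set.Iic (l i))).Finite := by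
      apply Set.Finite.of_finite_image (f := l)
      · exact (Set.finite_Iic (l i)).subset (by rintro _ ⟨k, hk, rfl⟩; exact hk.2)
      · exact hinj.mono Set.inter_subset_left
    have hcof : ∀ᶠ j in (U : Filter ℕ), j ∉ (G ∩ l ⁻¹' (Set.Iic (l i))) := by
      apply hUtop
      rw [← Nat.cofinite_eq_atTop]
      exact hfin.compl_mem_cofinite
    filter_upwards [hcof, hGU] with j hj hjG
    by_contra hcon
    exact hj ⟨hjG, not_lt.1 hcon⟩
  choose D hD using fun i => ultra_const U (fun j => H.blk (H.g a ^ j * x i))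
  obtain ⟨d, hd⟩ := ultra_const U D
  -- valid triples
  have triple : ∀ m, 0 < m → ∃ i i' j, (i ∈ G ∧ i' ∈ G ∧ j ∈ G ∧ i < j ∧ i' < j ∧ l i < l i' ∧
      H.blk (H.g a ^ j * x i) = d ∧ H.blk (H.g a ^ j * x i') = d) ∧ l i < l j ∧ l i % m = l j % m := by
    intro m hm
    have : NeZero m := ⟨hm.ne'⟩
    obtain ⟨ρ, hρ⟩ := ultra_const U (fun k => (⟨l k % m, Nat.mod_lt _ hm⟩ : Fin m))
    obtain ⟨i, hi1, hi2, hi3⟩ := (hGU.and (hd.and hρ)).exists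
    obtain ⟨i', hi'1, hi'2, hi'3⟩ := (hGU.and (hd.and (hlgt i))).exists
    have h1 := hD i
    have h2 := hD i'
    rw [hi2] at h1
    rw [hi'2] at h2
    obtain ⟨j, hj1, hj2, hj3, hj4, hj5, hj6, hj7⟩ :=
      (hGU.and ((hgt i).and ((hgt i').and (h1.and (h2.and ((hlgt i).and hρ)))))).exists
    refine ⟨i, i', j, ⟨hi1, hi'1, hj1, hj2, hj3, hi'3, hj4, hj5⟩, hj6, ?_⟩
    have := hi3.trans hj7.symm
    simpa using this
  have hdeg : ∀ i j, i ∈ G → i < j → 1 ≤ H.deg (H.g a ^ j * x i) := by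
    intro i j _ hij
    apply H.pos_left
    rw [H.deg_pow]
    omega
  classical
  have hex : ∃ u, ∃ i i' j, (i ∈ G ∧ i' ∈ G ∧ j ∈ G ∧ i < j ∧ i' < j ∧ l i < l i' ∧
      H.blk (H.g a ^ j * x i) = d ∧ H.blk (H.g a ^ j * x i') = d) ∧
      H.deg (H.g a ^ j * x i) = u := by
    obtain ⟨i, i', j, h, _⟩ := triple 1 one_pos
    exact ⟨_, i, i', j, h, rfl⟩
  obtain ⟨i, i', j, ⟨hi, hi', hj, hij, hij', hll, hbi, hbi'⟩, hu⟩ := Nat.find_spec hex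
  have hmin := fun {m} => Nat.find_min' (m := m) hex
  generalize Nat.find hex = u at hu hmin
  obtain ⟨t, ht⟩ := Nat.exists_eq_add_of_lt hll
  have r1 := H.rep (H.g a ^ j * x i)
  have r2 := H.rep (H.g a ^ j * x i')
  rw [hbi, hu] at r1
  rw [hbi'] at r2
  have hstep : H.g d ^ u * H.g b ^ (t + 1) = H.g d ^ H.deg (H.g a ^ j * x i') := by
    rw [r1, r2, mul_assoc, hxl i hi, hxl i' hi', ← pow_add, ht, add_assoc]
  have hule := H.le_right _ _ _ _ (hdeg i' j hi' hij') hstep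
  obtain ⟨p, p', q, ⟨hp, hp', hq, hpq, hpq', hpp, hbp, hbp'⟩, hlpq, hmod⟩ := triple (t + 1) (by omega)
  have hup : u ≤ H.deg (H.g a ^ q * x p) :=
    hmin ⟨p, p', q, ⟨hp, hp', hq, hpq, hpq', hpp, hbp, hbp'⟩, rfl⟩
  have hdvd : (t + 1) ∣ l q - l p := (Nat.modEq_iff_dvd' hlpq.le).1 hmod
  obtain ⟨k, hk⟩ := hdvd
  obtain ⟨v, hv, hve⟩ := H.shift_right _ d u _ hule hstep k _ hup
  have r3 := H.rep (H.g a ^ q * x p)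
  rw [hbp] at r3
  have hfin : H.g a ^ q * x q = H.g d ^ v := by
    rw [← hve, r3, ← pow_mul, ← hk, mul_assoc, hxl p hp, hxl q hq, ← pow_add,
      Nat.add_sub_cancel' hlpq.le]
  have hu1 : 1 ≤ u := by rw [← hu]; exact hdeg i j hi hij
  have hcd : c = d := by
    rw [← hq.2.2.2, hfin, H.blk_pow d v (by omega)]
  exact hbad p hp q hpq (hbp.trans hcd.symm)

theorem iter (H : MonoSetup M A) (z y : M) (c : A) (s : ℕ)
    (h : z * y = H.g c ^ s * y) (hc : H.blk y = c) (k : ℕ) :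
    z ^ k * y = H.g c ^ (s * k) * y := by
  have hcomm : Commute (H.g c) y := by
    have := H.rep y
    rw [hc] at this
    rw [← this]
    exact Commute.self_pow _ _
  induction k with
  | zero => simp
  | succ k ih =>
    have e1 : H.g c ^ s * y = y * H.g c ^ s := (hcomm.pow_left s).eq
    rw [pow_succ, mul_assoc, h, e1, ← mul_assoc, ih, mul_assoc, ← e1, ← mul_assoc, ← pow_add,
      mul_add, mul_one]

/-- A uniform period. -/
theorem exists_period [Finite A] (H : MonoSetup M A) :
    ∃ n, 1 ≤ n ∧ ∀ a y, 1 ≤ H.deg y → H.Good a y →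
      ∃ s, H.g a ^ n * y = H.g (H.blk y) ^ s * y := by
  classical
  have := Fintype.ofFinite A
  have hac : ∀ p : A × A, ∃ r, 1 ≤ r ∧ ∀ y, 1 ≤ H.deg y → H.blk y = p.2 → H.Good p.1 y →
      ∃ s, H.g p.1 ^ r * y = H.g p.2 ^ s * y := by
    rintro ⟨a, c⟩
    by_cases hex : ∃ e, ∃ y, H.deg y = e ∧ 1 ≤ H.deg y ∧ H.blk y = c ∧ H.Good a y
    · obtain ⟨y0, hy0, hpos, hblk, r, hr, hret⟩ := Nat.find_spec hex
      have hmin := fun {m} => Nat.find_min' (m := m) hex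
      generalize Nat.find hex = e at hy0 hmin
      refine ⟨r, hr, ?_⟩
      intro y hy1 hyc hyg
      have hle : e ≤ H.deg y := hmin ⟨y, rfl, hy1, hyc, hyg⟩
      have r0 := H.rep y0
      have r1 := H.rep (H.g a ^ r * y0)
      have r2 := H.rep y
      rw [hblk] at hret r0
      rw [hret] at r1
      rw [hyc] at r2
      rw [hy0] at r0
      have hs : H.g a ^ r * H.g c ^ e = H.g c ^ H.deg (H.g a ^ r * y0) := by rw [r1, r0]
      have hle2 := H.le_left _ _ _ _ (H.pos_right _ _ hpos) hs
      obtain ⟨s, hs2⟩ := Nat.exists_eq_add_of_le hle2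
      obtain ⟨w, hw⟩ := Nat.exists_eq_add_of_le hle
      refine ⟨s, ?_⟩
      simp only
      rw [← r2, hw, pow_add, ← mul_assoc, hs, hs2, ← pow_add, ← pow_add, ← pow_add]
      congr 1
      omega
    · refine ⟨1, le_rfl, ?_⟩
      intro y hy1 hyc hyg
      exact absurd ⟨_, y, rfl, hy1, hyc, hyg⟩ hex
  choose r hr hrs using hac
  refine ⟨∏ p, r p, Nat.one_le_iff_ne_zero.2 (Finset.prod_ne_zero_iff.2 fun p _ => Nat.one_le_iff_ne_zero.1 (hr p)), ?_⟩
  intro a y hy hg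
  obtain ⟨k, hk⟩ := Finset.dvd_prod_of_mem r (Finset.mem_univ (a, H.blk y))
  obtain ⟨s, hs⟩ := hrs (a, H.blk y) y hy rfl hg
  simp only at hs
  rw [hk, pow_mul]
  exact ⟨_, H.iter _ _ _ _ hs rfl k⟩

/-- The finite label of an element. -/
def finLabel (H : MonoSetup M A) (N : ℕ) (x : M) : A × ZMod N := (H.blk x, (H.deg x : ZMod N))

theorem finite_range [Finite A] (H : MonoSetup M A) (N : ℕ) (hN : 1 ≤ N) :
    (Set.range (fun s x : M => H.finLabel N (s * x))).Finite := by
  obtain ⟨n, hn, hper⟩ := H.exists_period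
  choose K hK using H.eventually_good
  have hnN : 1 ≤ n * N := Nat.mul_pos hn hN
  have hp : ∀ a k, K a + 1 ≤ k → ∀ x,
      H.finLabel N (H.g a ^ (k + n * N) * x) = H.finLabel N (H.g a ^ k * x) := by
    intro a k hk x
    have hpos : 1 ≤ H.deg (H.g a ^ k * x) := by
      apply H.pos_left
      rw [H.deg_pow]
      omega
    obtain ⟨s, hs⟩ := hper a _ hpos (hK a k (by omega) x)
    have h1 := H.iter _ _ _ _ hs rfl N
    have h2 : H.g a ^ (k + n * N) * x = H.g (H.blk (H.g a ^ k * x)) ^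
        (s * N + H.deg (H.g a ^ k * x)) := by
      rw [pow_add (H.g (H.blk (H.g a ^ k * x))), H.rep, ← h1, ← pow_mul, ← mul_assoc, ← pow_add,
        add_comm k]
    unfold finLabel
    rw [h2, H.blk_pow _ _ (by omega), H.deg_pow]
    simp
  have hfin : (⋃ a : A, (fun k : ℕ => (fun x : M => H.finLabel N (H.g a ^ k * x))) ''
      Set.Iio (K a + 1 + n * N)).Finite :=
    Set.finite_iUnion fun a => (Set.finite_Iio _).image _
  refine hfin.subset ?_
  rintro _ ⟨s, rfl⟩
  have hall : ∀ a k, (fun x : M => H.finLabel N (H.g a ^ k * x)) ∈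
      (⋃ a : A, (fun k : ℕ => (fun x : M => H.finLabel N (H.g a ^ k * x))) ''
      Set.Iio (K a + 1 + n * N)) := by
    intro a k
    induction k using Nat.strong_induction_on with
    | _ k ih =>
      by_cases hk : k < K a + 1 + n * N
      · exact Set.mem_iUnion.2 ⟨a, k, hk, rfl⟩
      · have h1 := ih (k - n * N) (by omega)
        have h2 : (fun x : M => H.finLabel N (H.g a ^ (k - n * N) * x)) =
            (fun x : M => H.finLabel N (H.g a ^ k * x)) := by
          funext x
          rw [← hp a (k - n * N) (by omega) x, Nat.sub_add_cancel (by omega)]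
        rwa [h2] at h1
  have := hall (H.blk s) (H.deg s)
  rwa [H.rep] at this

theorem separate [Finite A] (H : MonoSetup M A) (s t : M) (hst : s ≠ t) :
    ∃ (m : ℕ) (φ : M →* (Function.End (Fin m))ᵐᵒᵖ), φ s ≠ φ t := by
  set N := H.deg s + H.deg t + 1 with hN
  have hfin := H.finite_range N (by omega)
  set R := Set.range (fun s x : M => H.finLabel N (s * x)) with hR
  have : Finite R := hfin
  obtain ⟨m, ⟨e⟩⟩ := Finite.exists_equiv_fin R
  let act : M → R → R := fun y f => ⟨fun x => f.1 (y * x), by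
    obtain ⟨f, z, rfl⟩ := f
    exact ⟨z * y, by funext x; simp [mul_assoc]⟩⟩
  refine ⟨m, ⟨⟨fun y => MulOpposite.op (fun i => e (act y (e.symm i))), ?_⟩, ?_⟩, ?_⟩
  · apply MulOpposite.unop_injective
    funext i
    change e (act 1 (e.symm i)) = i
    simp [act]
  · intro y z
    apply MulOpposite.unop_injective
    funext i
    change e (act (y * z) (e.symm i)) = e (act z (e.symm (e (act y (e.symm i)))))
    simp [act, mul_assoc]
  · intro heq
    have h1 := MulOpposite.op_injective heq
    have h2 := congrFun h1 (e ⟨fun x => H.finLabel N (1 * x), 1, rfl⟩)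
    have h3 := e.injective h2
    have h4 := congrFun (congrArg Subtype.val h3) 1
    simp only [act, Equiv.symm_apply_apply, one_mul, mul_one, finLabel, Prod.mk.injEq] at h4
    obtain ⟨hb, hd⟩ := h4
    have hd' := (ZMod.natCast_eq_natCast_iff' _ _ _).1 hd
    rw [Nat.mod_eq_of_lt (by omega), Nat.mod_eq_of_lt (by omega)] at hd'
    apply hst
    rw [← H.rep s, ← H.rep t, hb, hd']

end MonoSetup

theorem coe_spow {S : Type*} [Semigroup S] (a : S) (i : ℕ) :
    ((spow a (i + 1) : S) : WithOne S) = (a : WithOne S) ^ (i + 1) := by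
  induction i with
  | zero => simp [spow]
  | succ i ih => rw [pow_succ, ← ih, ← WithOne.coe_mul]; rfl

theorem exists_setup {S : Type*} [Semigroup S] {A : Type*} [Nonempty A] (gen : A → S)
    (hcover : ∀ x : S, ∃ a : A, x ∈ Nblock (gen a))
    (hfree : ∀ (a b : A) (i j : ℕ), 1 ≤ i → 1 ≤ j →
      spow (gen a) i = spow (gen b) j → a = b ∧ i = j) :
    Nonempty (MonoSetup (WithOne S) A) := by
  have hex : ∀ x : WithOne S, ∃ p : A × ℕ, (gen p.1 : WithOne S) ^ p.2 = x := by
    intro x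
    induction x using WithOne.recOneCoe with
    | one => exact ⟨(Classical.arbitrary A, 0), pow_zero _⟩
    | coe x =>
      obtain ⟨a, i, hi, rfl⟩ := hcover x
      obtain ⟨i, rfl⟩ := Nat.exists_eq_add_of_le' hi
      exact ⟨(a, i + 1), (coe_spow _ _).symm⟩
  have huniq : ∀ a b i j, (gen a : WithOne S) ^ i = (gen b : WithOne S) ^ j →
      i = j ∧ (1 ≤ i → a = b) := by
    intro a b i j h
    rcases i with _ | i <;> rcases j with _ | j
    · simp
    · rw [← coe_spow, pow_zero] at h
      exact absurd h WithOne.one_ne_coe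
    · rw [← coe_spow, pow_zero] at h
      exact absurd h WithOne.coe_ne_one
    · rw [← coe_spow, ← coe_spow, WithOne.coe_inj] at h
      have := hfree a b _ _ (by omega) (by omega) h
      exact ⟨this.2, fun _ => this.1⟩
  choose p hp using hex
  have hdeg : ∀ x, 1 ≤ (p x).2 ↔ x ≠ 1 := by
    intro x
    constructor
    · rintro h rfl
      have := (huniq (p 1).1 (p 1).1 (p 1).2 0 (by rw [hp, pow_zero])).1
      omega
    · intro h
      by_contra h0
      have h1 : (p x).2 = 0 := by omega
      apply h
      rw [← hp x, h1, pow_zero]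
  have hmul : ∀ x y : WithOne S, x * y = 1 → x = 1 ∧ y = 1 := by
    intro x y
    induction x using WithOne.recOneCoe with
    | one => simp
    | coe x =>
      induction y using WithOne.recOneCoe with
      | one => simp
      | coe y =>
        intro h
        rw [← WithOne.coe_mul] at h
        exact absurd h WithOne.coe_ne_one
  exact ⟨{
    g := fun a => (gen a : WithOne S)
    blk := fun x => (p x).1
    deg := fun x => (p x).2
    rep := hp
    blk_pow := fun a i hi => ((huniq _ _ _ _ (hp ((gen a : WithOne S) ^ i)).symm).2 hi).symm
    deg_pow := fun a i => (huniq _ _ _ _ (hp ((gen a : WithOne S) ^ i))).1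
    pos_left := fun x y h => (hdeg _).2 fun h1 => (hdeg _).1 h (hmul x y h1).1
    pos_right := fun x y h => (hdeg _).2 fun h1 => (hdeg _).1 h (hmul x y h1).2 }⟩

theorem stmt11 {S : Type*} [Semigroup S] {A : Type*} [Finite A] (gen : A → S)
    (hcover : ∀ x : S, ∃ a : A, x ∈ Nblock (gen a))
    (hfree : ∀ (a b : A) (i j : ℕ), 1 ≤ i → 1 ≤ j →
      spow (gen a) i = spow (gen b) j → a = b ∧ i = j) :
    ResiduallyFiniteSemigroup S := by
  intro s t hst
  have : Nonempty A := ⟨(hcover s).choose⟩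
  obtain ⟨H⟩ := exists_setup gen hcover hfree
  obtain ⟨m, φ, hφ⟩ := H.separate (s : WithOne S) (t : WithOne S)
    (fun h => hst (WithOne.coe_inj.1 h))
  have hT : Finite (Function.End (Fin m)) := inferInstanceAs (Finite (Fin m → Fin m))
  refine ⟨(Function.End (Fin m))ᵐᵒᵖ, inferInstance,
    Finite.of_equiv _ MulOpposite.opEquiv, ⟨fun x => φ (x : WithOne S), ?_⟩, hφ⟩
  intro x y
  rw [WithOne.coe_mul, map_mul]
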